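/- Let C be a category which is free on a graph, i.e. there exists a quiver V and an isomorphism of categories between C and the path category Paths V. Then for every object x of C, the full subcategory of C on the single object x is again free on a graph; equivalently, the endomorphism monoid of x in C is a free monoid: there exists a type S and a multiplicative isomorphism End(x) ≃* FreeMonoid S. -/

import Mathlib

universe v u v' u'

open CategoryTheory

/-!
In the monoid of loops at a vertex, two factorizations `p * q = r * s` of the same path cut it at
two places, so the earlier cut refines the later one: the monoid is equidivisible. Path length is
additive and vanishes only on the empty path, so every loop is a product of irreducible loops.
By Levi's lemma these two properties make the monoid free on its irreducible elements, since
equidivisibility forces two factorizations into irreducibles to agree letter by letter.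
-/

/-- Equidivisibility (Levi's property): any two factorizations of the same element have a common
refinement. -/
def IsEquidivisible (M : Type*) [Mul M] : Prop :=
  ∀ ⦃a b c d : M⦄, a * b = c * d → (∃ m, c = a * m ∧ b = m * d) ∨ (∃ m, a = c * m ∧ d = m * b)

/-- The evaluation of a word in the irreducible elements of a monoid, the candidate isomorphism
from a free monoid. -/
def irreducibleWordProd (M : Type*) [Monoid M] : FreeMonoid {a : M // Irreducible a} →* M :=
  FreeMonoid.lift Subtype.val

section Monoid

variable {M : Type*} [Monoid M]

theorem irreducibleWordProd_of_mul (p : {a : M // Irreducible a})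
    (x : FreeMonoid {a : M // Irreducible a}) :
    irreducibleWordProd M (FreeMonoid.of p * x) = p * irreducibleWordProd M x := by
  simp [irreducibleWordProd]

theorem mul_ne_one_of_irreducible {p : M} (hp : Irreducible p) (a : M) : p * a ≠ 1 := by
  intro hpa
  have hp_factor : p = p * (a * p) := by rw [← mul_assoc, hpa, one_mul]
  have hap_unit : IsUnit (a * p) := (hp.isUnit_or_isUnit hp_factor).resolve_left hp.not_isUnit
  have hap_idem : a * p * (a * p) = a * p := by rw [mul_assoc, ← hp_factor]
  have hap : a * p = 1 := hap_unit.mul_eq_left.1 hap_idem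
  exact hp.not_isUnit ⟨⟨p, a, hpa, hap⟩, rfl⟩

theorem IsEquidivisible.eq_and_eq_of_irreducible_mul_eq [Subsingleton Mˣ]
    (hM : IsEquidivisible M) {p q a b : M} (hp : Irreducible p) (hq : Irreducible q)
    (h : p * a = q * b) : p = q ∧ a = b := by
  rcases hM h with ⟨m, rfl, rfl⟩ | ⟨m, rfl, rfl⟩
  · obtain rfl : m = 1 := hq.eq_one_or_eq_one.resolve_left hp.ne_one
    simp
  · obtain rfl : m = 1 := hp.eq_one_or_eq_one.resolve_left hq.ne_one
    simp

theorem IsEquidivisible.irreducibleWordProd_injective [Subsingleton Mˣ]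
    (hM : IsEquidivisible M) : Function.Injective (irreducibleWordProd M) := by
  intro x
  induction x using FreeMonoid.recOn with
  | one =>
    intro y h
    cases y using FreeMonoid.casesOn with
    | one => rfl
    | of_mul q y =>
      rw [irreducibleWordProd_of_mul, map_one] at h
      exact absurd h.symm (mul_ne_one_of_irreducible q.2 _)
  | of_mul p x ih =>
    intro y h
    cases y using FreeMonoid.casesOn with
    | one =>
      rw [irreducibleWordProd_of_mul, map_one] at h
      exact absurd h (mul_ne_one_of_irreducible p.2 _)
    | of_mul q y =>
      rw [irreducibleWordProd_of_mul, irreducibleWordProd_of_mul] at h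
      obtain ⟨hpq, hxy⟩ := hM.eq_and_eq_of_irreducible_mul_eq p.2 q.2 h
      rw [Subtype.ext hpq, ih hxy]

theorem subsingleton_units_of_map_eq_one_imp {N : Type*} [Monoid N] [Subsingleton Nˣ]
    (f : M →* N) (hf : ∀ a, f a = 1 → a = 1) : Subsingleton Mˣ :=
  subsingleton_of_forall_eq 1 fun u => Units.ext (hf u (u.isUnit.map f).eq_one)

theorem closure_irreducible_eq_top (length : M →* Multiplicative ℕ)
    (hlength : ∀ a, length a = 1 → a = 1) : Submonoid.closure {a : M | Irreducible a} = ⊤ := by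
  have := subsingleton_units_of_map_eq_one_imp length hlength
  have length_pos (a : M) (ha : ¬IsUnit a) : 0 < (length a).toAdd :=
    Nat.pos_of_ne_zero fun h => ha (isUnit_iff_eq_one.2 (hlength a h))
  refine (Submonoid.eq_top_iff' _).2 fun a => ?_
  induction hn : (length a).toAdd using Nat.strong_induction_on generalizing a with
  | _ n ih =>
    subst hn
    by_cases ha : IsUnit a
    · exact ha.eq_one ▸ one_mem _
    rcases irreducible_or_factor ha with ha | ⟨b, c, hb, hc, rfl⟩
    · exact Submonoid.subset_closure ha
    · rw [map_mul, toAdd_mul] at ih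
      have hb := length_pos b hb
      have hc := length_pos c hc
      exact mul_mem (ih _ (by lia) b rfl) (ih _ (by lia) c rfl)

/-- Levi's lemma: an equidivisible monoid with an additive length that vanishes only at `1` is free
on its irreducible elements. The length takes values in `Multiplicative ℕ` so that additivity is
being a monoid homomorphism. -/
noncomputable def IsEquidivisible.mulEquivFreeMonoid (hM : IsEquidivisible M)
    (length : M →* Multiplicative ℕ) (hlength : ∀ a, length a = 1 → a = 1) :
    M ≃* FreeMonoid {a : M // Irreducible a} :=
  have := subsingleton_units_of_map_eq_one_imp length hlength
  have surjective : Function.Surjective (irreducibleWordProd M) := by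
    rw [← MonoidHom.mrange_eq_top, irreducibleWordProd, FreeMonoid.mrange_lift,
      Subtype.range_coe_subtype, closure_irreducible_eq_top length hlength]
  (MulEquiv.ofBijective _ ⟨hM.irreducibleWordProd_injective, surjective⟩).symm

end Monoid

section Paths

variable {V : Type*} [Quiver V]

theorem exists_path_refinement_of_comp_eq_comp {a b c d : V} {p : Quiver.Path a b}
    {q : Quiver.Path b d} {r : Quiver.Path a c} {s : Quiver.Path c d} (h : p.comp q = r.comp s) :
    (∃ m : Quiver.Path b c, r = p.comp m ∧ q = m.comp s) ∨
      ∃ m : Quiver.Path c b, p = r.comp m ∧ s = m.comp q := by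
  induction s with
  | nil => exact .inl ⟨q, h.symm, rfl⟩
  | cons s e ih =>
    cases q with
    | nil => exact .inr ⟨s.cons e, h, rfl⟩
    | cons q e' =>
      simp only [Quiver.Path.comp_cons, Quiver.Path.cons.injEq] at h
      obtain ⟨rfl, hpath, harrow⟩ := h
      obtain rfl := harrow.eq
      rcases ih hpath.eq with ⟨m, hr, rfl⟩ | ⟨m, hp, rfl⟩
      · exact .inl ⟨m, hr, rfl⟩
      · exact .inr ⟨m, hp, rfl⟩

theorem isEquidivisible_end_paths (X : Paths V) : IsEquidivisible (End X) := by
  intro a b c d h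
  -- Multiplication in `End X` is `a * b = b ≫ a`, which exchanges the two cases.
  rcases exists_path_refinement_of_comp_eq_comp h with ⟨m, hd, hb⟩ | ⟨m, hb, hd⟩
  · exact .inr ⟨m, hb, hd⟩
  · exact .inl ⟨m, hd, hb⟩

/-- The length of a loop in the path category, as a monoid homomorphism. -/
def loopLength (X : Paths V) : End X →* Multiplicative ℕ where
  toFun p := .ofAdd (Quiver.Path.length p)
  map_one' := rfl
  map_mul' p q := (congrArg Multiplicative.ofAdd (Quiver.Path.length_comp q p)).trans (mul_comm _ _)

theorem eq_one_of_loopLength_eq_one {X : Paths V} (p : End X) (hp : loopLength X p = 1) : p = 1 :=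
  Quiver.Path.eq_nil_of_length_zero p hp

end Paths

theorem end_of_free_category_is_free_monoid_general {C : Type u} [Category.{v} C]
    {V : Type*} [Quiver V] {F : C ⥤ Paths V} (hF : F.FullyFaithful) (x : C) :
    Nonempty (End x ≃* FreeMonoid {f : End x // Irreducible f}) :=
  let e := hF.mulEquivEnd x
  let irreducibleEquiv : {p : End (F.obj x) // Irreducible p} ≃ {f : End x // Irreducible f} :=
    e.symm.toEquiv.subtypeEquiv fun _ => (MulEquiv.irreducible_iff e.symm).symm
  let loopsEquiv := (isEquidivisible_end_paths (F.obj x)).mulEquivFreeMonoid (loopLength _)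
    eq_one_of_loopLength_eq_one
  ⟨(e.trans loopsEquiv).trans (FreeMonoid.freeMonoidCongr irreducibleEquiv)⟩

/-- If a category `C` is free on a graph, i.e. it is isomorphic (as a category)
to the path category `Paths V` of some quiver `V`, then for every object `x` of `C`
the endomorphism monoid of `x` (the morphism monoid of the full subcategory of `C`
on the single object `x`) is a free monoid. -/
theorem end_of_free_category_is_free_monoid {C : Type u} [Category.{v} C]
    (hfree : ∃ (V : Type u') (_ : Quiver.{v' + 1} V)
      (F : C ⥤ Paths V) (G : Paths V ⥤ C),
        F ⋙ G = 𝟭 C ∧ G ⋙ F = 𝟭 (Paths V)) :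
    ∀ x : C, ∃ S : Type v, Nonempty (End x ≃* FreeMonoid S) := by
  obtain ⟨V, _, F, G, hFG, hGF⟩ := hfree
  let e : C ≌ Paths V := .mk F G (eqToIso hFG.symm) (eqToIso hGF)
  exact fun x => ⟨_, end_of_free_category_is_free_monoid_general e.fullyFaithfulFunctor x⟩
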